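/- Let d ∈ ℕ with wcol_{2r}(G, ≤) ≤ d. Let D be the directed graph whose vertices are the distinct sequences first_i(v) for v ∈ V and 0 ≤ i ≤ d, with an arc from Y to X for every pair of distinct vertices X, Y of D such that X is the empty sequence or max X occurs as an entry of Y. Then every vertex of D has out-degree at most 1 + d² · 2^d. -/

import Mathlib

open SimpleGraph

variable {V : Type*}

/-- `u ∈ wreach G r v` iff `u` is weakly `r`-reachable from `v`:
there is a path of length at most `r` from `v` to `u` on which `u` is the `≤`-least vertex. -/
def wreach [LinearOrder V] (G : SimpleGraph V) (r : ℕ) (v : V) : Set V :=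
  {u | ∃ p : G.Walk v u, p.IsPath ∧ p.length ≤ r ∧ ∀ w ∈ p.support, u ≤ w}

/-- The weak `r`-coloring number of `(G, ≤)`: the maximum of `|wreach_r[v]|` over `v`. -/
noncomputable def wcol [LinearOrder V] (G : SimpleGraph V) (r : ℕ) : ℕ :=
  sSup (Set.range fun v => (wreach G r v).ncard)

/-- `firstSeq G r i v`: the sequence consisting of the `i` smallest elements of
`wreach G r v` in increasing order, padded at the end with `v` to have length exactly `i`. -/
noncomputable def firstSeq [Fintype V] [LinearOrder V] (G : SimpleGraph V) (r i : ℕ)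
    (v : V) : List V :=
  let l := ((Set.toFinite (wreach G r v)).toFinset.sort (· ≤ ·)).take i
  l ++ List.replicate (i - l.length) v

/-- The `≤`-greatest entry of a nonempty list (junk value on the empty list). -/
noncomputable def listMax [LinearOrder V] [Nonempty V] : List V → V
  | [] => Classical.arbitrary V
  | a :: as => as.foldr max a

theorem foldr_max_spec [LinearOrder V] (a : V) (l : List V) :
    l.foldr max a ∈ a :: l ∧ ∀ x ∈ a :: l, x ≤ l.foldr max a := by
  induction l with
  | nil => simp
  | cons b l ih =>
    obtain ⟨h1, h2⟩ := ih
    refine ⟨?_, ?_⟩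
    · rw [List.foldr_cons]
      rcases max_choice b (l.foldr max a) with h | h
      · rw [h]; simp
      · rw [h]
        simp only [List.mem_cons] at h1 ⊢
        tauto
    · intro x hx
      rw [List.foldr_cons]
      simp only [List.mem_cons] at hx h2
      rcases hx with h | h | h
      · exact le_max_of_le_right (h2 x (Or.inl h))
      · exact h ▸ le_max_left _ _
      · exact le_max_of_le_right (h2 x (Or.inr h))

theorem listMax_spec [LinearOrder V] [Nonempty V] (l : List V) (h : l ≠ []) :
    listMax l ∈ l ∧ ∀ x ∈ l, x ≤ listMax l := by
  cases l with
  | nil => exact absurd rfl h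
  | cons a l => exact foldr_max_spec a l

theorem wreach_self [LinearOrder V] (G : SimpleGraph V) (r : ℕ) (v : V) :
    v ∈ wreach G r v := ⟨Walk.nil, by simp, by simp, by simp⟩

theorem wreach_le [LinearOrder V] {G : SimpleGraph V} {r : ℕ} {u v : V}
    (h : u ∈ wreach G r v) : u ≤ v := by
  obtain ⟨p, _, _, h⟩ := h
  exact h v (by simp)

theorem wreach_trans [LinearOrder V] {G : SimpleGraph V} {r : ℕ} {u v m : V}
    (hu : u ∈ wreach G r v) (hm : m ∈ wreach G r v) (h : u ≤ m) :
    u ∈ wreach G (2 * r) m := by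
  classical
  obtain ⟨p, _, hp, hp'⟩ := hu
  obtain ⟨q, _, hq, hq'⟩ := hm
  refine ⟨(q.reverse.append p).bypass, Walk.bypass_isPath _, ?_, ?_⟩
  · refine (Walk.length_bypass_le_length _).trans ?_
    rw [Walk.length_append, Walk.length_reverse]
    omega
  · intro w hw
    have := Walk.support_bypass_subset_support _ hw
    rw [Walk.mem_support_append_iff, Walk.support_reverse, List.mem_reverse] at this
    rcases this with h1 | h1
    · exact h.trans (hq' w h1)
    · exact hp' w h1

theorem firstSeq_length [Fintype V] [LinearOrder V] (G : SimpleGraph V) (r i : ℕ) (v : V) :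
    (firstSeq G r i v).length = i := by
  simp only [firstSeq, List.length_append, List.length_replicate, List.length_take]
  omega

theorem firstSeq_mem [Fintype V] [LinearOrder V] {G : SimpleGraph V} {r i : ℕ} {v x : V}
    (h : x ∈ firstSeq G r i v) : x ∈ wreach G r v := by
  simp only [firstSeq, List.mem_append] at h
  rcases h with h | h
  · simpa using List.mem_of_mem_take h
  · rw [List.eq_of_mem_replicate h]
    exact wreach_self G r v

theorem firstSeq_eq [Fintype V] [LinearOrder V] [Nonempty V] (G : SimpleGraph V) (r i : ℕ)
    (v : V) (hne : firstSeq G r i v ≠ []) :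
    firstSeq G r i v = (firstSeq G r i v).toFinset.sort (· ≤ ·) ++
      List.replicate (i - (firstSeq G r i v).toFinset.card) (listMax (firstSeq G r i v)) := by
  have hs := listMax_spec _ hne
  set m := listMax (firstSeq G r i v) with hm
  clear_value m
  set F := (Set.toFinite (wreach G r v)).toFinset with hF
  have hvF : v ∈ F := by simpa [hF] using wreach_self G r v
  by_cases hi : i ≤ F.card
  · have e : firstSeq G r i v = (F.sort (· ≤ ·)).take i := by
      simp [firstSeq, ← hF, hi]
    have nd : ((F.sort (· ≤ ·)).take i).Nodup := (F.sort_nodup (· ≤ ·)).sublist (List.take_sublist _ _)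
    have so : ((F.sort (· ≤ ·)).take i).Pairwise (· ≤ ·) :=
      (F.pairwise_sort (· ≤ ·)).sublist (List.take_sublist _ _)
    rw [e, (List.toFinset_sort (· ≤ ·) nd).2 so, List.toFinset_card_of_nodup nd]
    simp [hi]
  · have e : firstSeq G r i v = F.sort (· ≤ ·) ++ List.replicate (i - F.card) v := by
      have : (F.sort (· ≤ ·)).take i = F.sort (· ≤ ·) := by
        apply List.take_of_length_le
        simp; omega
      simp only [firstSeq, ← hF, this, Finset.length_sort]
    have hmv : m = v := by
      apply le_antisymm
      · exact wreach_le (firstSeq_mem hs.1)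
      · apply hs.2
        rw [e]
        simp [hvF]
    have ef : (firstSeq G r i v).toFinset = F := by
      rw [e]
      ext x
      simp only [List.mem_toFinset, List.mem_append, Finset.mem_sort, List.mem_replicate]
      constructor
      · rintro (h | ⟨_, rfl⟩)
        · exact h
        · exact hvF
      · exact Or.inl
    rw [ef, hmv, e]

theorem wreach_card_le [Fintype V] [LinearOrder V] (G : SimpleGraph V) (r d : ℕ)
    (hd : wcol G r ≤ d) (v : V) : (Set.toFinite (wreach G r v)).toFinset.card ≤ d := by
  rw [← Set.ncard_eq_toFinset_card]
  refine le_trans ?_ hd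
  exact le_csSup (Set.finite_range _).bddAbove ⟨v, rfl⟩

theorem statement11 [Fintype V] [LinearOrder V] [Nonempty V] (G : SimpleGraph V) (r : ℕ)
    (d : ℕ) (hd : wcol G (2 * r) ≤ d)
    (Y : List V) (hY : ∃ v : V, ∃ i : ℕ, i ≤ d ∧ Y = firstSeq G r i v) :
    -- the out-neighborhood of `Y` in the directed graph `D`
    {X : List V | (∃ v : V, ∃ i : ℕ, i ≤ d ∧ X = firstSeq G r i v) ∧ X ≠ Y ∧
      (X = [] ∨ listMax X ∈ Y)}.ncard ≤ 1 + d ^ 2 * 2 ^ d := by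
  classical
  set B : Finset (List V) := Y.toFinset.biUnion fun m => (Finset.Icc 1 d).biUnion fun i =>
    (Set.toFinite (wreach G (2 * r) m)).toFinset.powerset.image fun S =>
      S.sort (· ≤ ·) ++ List.replicate (i - S.card) m with hB
  have hYc : Y.toFinset.card ≤ d := by
    obtain ⟨v, i, hi, rfl⟩ := hY
    exact (List.toFinset_card_le _).trans ((firstSeq_length G r i v).trans_le hi)
  have hBc : B.card ≤ d * (d * 2 ^ d) := by
    refine (Finset.card_biUnion_le_card_mul _ _ (d * 2 ^ d) ?_).trans
      (Nat.mul_le_mul_right _ hYc)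
    intro m _
    refine (Finset.card_biUnion_le_card_mul _ _ (2 ^ d) ?_).trans (by simp)
    intro i _
    refine Finset.card_image_le.trans ?_
    rw [Finset.card_powerset]
    exact Nat.pow_le_pow_right (by norm_num) (wreach_card_le G _ d hd m)
  have hsub : {X : List V | (∃ v : V, ∃ i : ℕ, i ≤ d ∧ X = firstSeq G r i v) ∧ X ≠ Y ∧
      (X = [] ∨ listMax X ∈ Y)} ⊆ ((insert [] B : Finset (List V)) : Set (List V)) := by
    rintro X ⟨⟨v, i, hi, hX⟩, _, h⟩
    rw [Finset.mem_coe, Finset.mem_insert]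
    by_cases hne : X = []
    · exact Or.inl hne
    right
    have hm := h.resolve_left hne
    have hl : X.length = i := hX ▸ firstSeq_length G r i v
    have hpos := List.length_pos_of_ne_nil hne
    have hs := listMax_spec X hne
    simp only [hB, Finset.mem_biUnion, Finset.mem_image, Finset.mem_powerset]
    refine ⟨listMax X, by simpa using hm, i, by simp; omega, X.toFinset, ?_, ?_⟩
    · intro u hu
      rw [List.mem_toFinset] at hu
      rw [Set.Finite.mem_toFinset]
      have hmem : ∀ x ∈ X, x ∈ wreach G r v := by
        intro x hx
        rw [hX] at hx
        exact firstSeq_mem hx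
      exact wreach_trans (hmem u hu) (hmem _ hs.1) (hs.2 u hu)
    · have := firstSeq_eq G r i v (hX ▸ hne)
      rw [← hX] at this
      exact this.symm
  refine (Set.ncard_le_ncard hsub (Finset.finite_toSet _)).trans ?_
  rw [Set.ncard_coe_finset]
  refine (Finset.card_insert_le _ _).trans ?_
  have : d ^ 2 * 2 ^ d = d * (d * 2 ^ d) := by ring
  omega
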